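/- arXiv:1708.02815 — 2 statements merged into one kernel-verified Lean document; each statement's English description precedes it below -/
import Mathlib

section
/- Let (Q, n) be a regular local ring of embedding dimension 2, let J ⊆ n² be an ideal, and let i ≥ 3 be an integer such that n^i is not contained in J. Then the ideal J + n^i cannot be generated by two elements, i.e., every generating set of J + n^i has at least 3 elements. -/
/-!
Put `I = J + n^i` and suppose `I` is generated by two elements. Since `n^i ⊄ J`, Nakayama's lemma
shows that `J` does not generate `I` modulo `n I`, so one can choose generators `f`, `g` of `I` with
`f ∈ n²` and `g ∈ n^i`, and `n^i ⊆ (f, g)`. In `R = Q / (f)` the ideal `n^i` is then principal,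
generated by the class of `g`.

The socle of `R` vanishes: `Q` is a domain in which some minimal generator `x` of `n = (x, y)` is
prime, so `x u = f p` and `y u = f q` force `y p = x q`, hence `x ∣ p` and `f ∣ u`. As a power of
`n` is contained in `(f, g)`, this makes `g` a nonzerodivisor on `R`. So `n^i R = g R` is an
invertible ideal, and its divisor `n R` is invertible too; over a local ring this means principal.
Because `f ∈ n²`, Nakayama makes `n` itself principal, which contradicts `dim Q = 2` by Krull's
principal ideal theorem.

That a two-dimensional regular local ring is a domain is proved here by choosing `x` outside `n²`
and all minimal primes. Then `Q / (x)` has a principal, non-nilpotent maximal ideal, so `(x)` is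
prime; a minimal prime `P ⊆ (x)` satisfies `P = x P`, hence `P = 0`.
-/

open IsLocalRing

section TwoDim

variable {Q : Type*} [CommRing Q] [IsLocalRing Q] [IsNoetherianRing Q]

omit [IsNoetherianRing Q] in
lemma height_maximalIdeal_eq_two (hdim : ringKrullDim Q = 2) : (maximalIdeal Q).height = 2 := by
  have h := IsLocalRing.maximalIdeal_height_eq_ringKrullDim (R := Q)
  rw [hdim] at h
  exact WithBot.coe_injective h

/-- Krull's principal ideal theorem: in dimension two the maximal ideal is not minimal over a
principal ideal. -/
lemma not_pow_le_span_singleton (hdim : ringKrullDim Q = 2) (a : Q) (ha : a ∈ maximalIdeal Q)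
    (k : ℕ) : ¬ (maximalIdeal Q) ^ k ≤ Ideal.span {a} := by
  intro h
  have hmin : maximalIdeal Q ∈ (Ideal.span {a}).minimalPrimes := by
    refine ⟨⟨inferInstance, (Ideal.span_singleton_le_iff_mem _).2 ha⟩, ?_⟩
    rintro q ⟨hq, hle⟩ -
    exact hq.le_of_pow_le (h.trans hle)
  have h1 := Ideal.height_le_one_of_isPrincipal_of_mem_minimalPrimes _ _ hmin
  rw [height_maximalIdeal_eq_two hdim] at h1
  exact absurd h1 (by decide)

omit [IsLocalRing Q] [IsNoetherianRing Q] in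
/-- Exchange property: a combination with a unit coefficient can replace a generator. -/
lemma span_pair_le_of_isUnit {a b f p q : Q} (hp : IsUnit p) (hf : p * a + q * b = f) :
    Ideal.span {a, b} ≤ Ideal.span {f, b} := by
  obtain ⟨v, hv⟩ := hp.exists_left_inv
  rw [Ideal.span_le]
  rintro z (rfl | rfl)
  · exact Ideal.mem_span_pair.2 ⟨v, -(v * q), by rw [← hf]; linear_combination z * hv⟩
  · exact Ideal.subset_span (by simp)

omit [IsNoetherianRing Q] in
/-- An element of the maximal ideal that avoids its square is part of a generating pair. -/
lemma exists_span_pair_eq (hreg : ∃ x y : Q, Ideal.span {x, y} = maximalIdeal Q) {x : Q}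
    (hx : x ∈ maximalIdeal Q) (hx2 : x ∉ (maximalIdeal Q) ^ 2) :
    ∃ y, Ideal.span {x, y} = maximalIdeal Q := by
  obtain ⟨s, t, hst⟩ := hreg
  have hs : s ∈ maximalIdeal Q := hst ▸ Ideal.subset_span (by simp)
  have ht : t ∈ maximalIdeal Q := hst ▸ Ideal.subset_span (by simp)
  have key : ∀ y ∈ maximalIdeal Q, maximalIdeal Q ≤ Ideal.span {x, y} →
      ∃ y, Ideal.span {x, y} = maximalIdeal Q := by
    refine fun y hy h => ⟨y, le_antisymm ?_ h⟩
    rw [Ideal.span_le]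
    rintro z (rfl | rfl) <;> assumption
  obtain ⟨p, q, hpq⟩ := Ideal.mem_span_pair.1 (hst ▸ hx)
  by_cases hp : IsUnit p
  · exact key t ht (hst ▸ span_pair_le_of_isUnit hp hpq)
  by_cases hq : IsUnit q
  · rw [Set.pair_comm] at hst
    exact key s hs (hst ▸ span_pair_le_of_isUnit hq (by rw [← hpq, add_comm]))
  refine absurd ?_ hx2
  rw [← hpq, pow_two]
  exact add_mem (Ideal.mul_mem_mul hp hs) (Ideal.mul_mem_mul hq ht)

omit [IsLocalRing Q] [IsNoetherianRing Q] in
lemma sup_pow_le_sup_pow (A B : Ideal Q) (k : ℕ) : (A ⊔ B) ^ k ≤ A ⊔ B ^ k := by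
  induction k with
  | zero => simp
  | succ k ih =>
    calc (A ⊔ B) ^ (k + 1) = (A ⊔ B) ^ k * (A ⊔ B) := pow_succ _ _
      _ ≤ (A ⊔ B ^ k) * (A ⊔ B) := Ideal.mul_mono_left ih
      _ = A * (A ⊔ B) ⊔ (B ^ k * A ⊔ B ^ k * B) := by rw [Ideal.sup_mul, Ideal.mul_sup (B ^ k)]
      _ ≤ A ⊔ B ^ (k + 1) := by
        rw [← pow_succ]
        have h1 : A * (A ⊔ B) ≤ A := Ideal.mul_le_left
        have h2 : B ^ k * A ≤ A := Ideal.mul_le_right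
        exact sup_le (le_sup_of_le_left h1) (sup_le_sup_right h2 _)

/-- A minimal generator `x` of the maximal ideal is prime: modulo `x`, every nonzero element is a
unit times a power of the other generator `y`, and no power of `y` vanishes. -/
lemma isPrime_span_singleton (hdim : ringKrullDim Q = 2) {x y : Q}
    (hxy : Ideal.span {x, y} = maximalIdeal Q) : (Ideal.span {x}).IsPrime := by
  have hx : x ∈ maximalIdeal Q := hxy ▸ Ideal.subset_span (by simp)
  have hle : Ideal.span {x} ≤ maximalIdeal Q := (Ideal.span_singleton_le_iff_mem _).2 hx
  have hsup : maximalIdeal Q = Ideal.span {x} ⊔ Ideal.span {y} := by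
    rw [← hxy, Ideal.span_insert]
  have hpow : ∀ k, (maximalIdeal Q) ^ k ≤ Ideal.span {x} ⊔ Ideal.span {y ^ k} := by
    intro k
    rw [hsup, ← Ideal.span_singleton_pow]
    exact sup_pow_le_sup_pow _ _ k
  have hy : ∀ k, y ^ k ∉ Ideal.span {x} := by
    intro k hk
    refine not_pow_le_span_singleton hdim x hx k ((hpow k).trans ?_)
    exact sup_le le_rfl ((Ideal.span_singleton_le_iff_mem _).2 hk)
  have hform : ∀ u ∉ Ideal.span {x}, ∃ (k : ℕ) (w : Q), IsUnit w ∧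
      u - w * y ^ k ∈ Ideal.span {x} := by
    intro u hu
    -- Krull's intersection theorem in `Q / (x)`
    have hex : ∃ k, u ∉ Ideal.span {x} ⊔ (maximalIdeal Q) ^ k := by
      by_contra! h
      have : Nontrivial (Q ⧸ Ideal.span {x}) :=
        Ideal.Quotient.nontrivial_iff.2 (hle.trans_lt (maximalIdeal.isMaximal Q).ne_top.lt_top).ne
      have : IsLocalRing (Q ⧸ Ideal.span {x}) :=
        .of_surjective' (Ideal.Quotient.mk _) Ideal.Quotient.mk_surjective
      have hne : (maximalIdeal Q).map (Ideal.Quotient.mk (Ideal.span {x})) ≠ ⊤ := by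
        intro h'
        have h2 := congrArg (Ideal.comap (Ideal.Quotient.mk (Ideal.span {x}))) h'
        rw [Ideal.comap_map_of_surjective _ Ideal.Quotient.mk_surjective, Ideal.comap_top,
          ← RingHom.ker_eq_comap_bot, Ideal.mk_ker, sup_eq_left.2 hle] at h2
        exact (maximalIdeal.isMaximal Q).ne_top h2
      have hbot := Ideal.iInf_pow_eq_bot_of_isLocalRing _ hne
      refine hu (Ideal.Quotient.eq_zero_iff_mem.1 ?_)
      rw [← Ideal.mem_bot, ← hbot, Ideal.mem_iInf]
      intro k
      rw [← Ideal.map_pow]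
      obtain ⟨r, hr, s, hs, rfl⟩ := Submodule.mem_sup.1 (h k)
      rw [map_add, Ideal.Quotient.eq_zero_iff_mem.2 hr, zero_add]
      exact Ideal.mem_map_of_mem _ hs
    classical
    obtain ⟨m, hm, hmin⟩ : ∃ m, u ∉ Ideal.span {x} ⊔ (maximalIdeal Q) ^ (m + 1) ∧
        u ∈ Ideal.span {x} ⊔ (maximalIdeal Q) ^ m := by
      have h0 : Nat.find hex ≠ 0 := by
        intro h
        have := Nat.find_spec hex
        rw [h] at this
        simp at this
      obtain ⟨m, hm⟩ := Nat.exists_eq_succ_of_ne_zero h0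
      refine ⟨m, ?_, ?_⟩
      · have := Nat.find_spec hex
        rwa [hm] at this
      by_contra h
      exact Nat.find_min hex (m := m) (by omega) h
    have hu2 := (sup_le le_sup_left (hpow m) : _ ≤ Ideal.span {x} ⊔ Ideal.span {y ^ m}) hmin
    obtain ⟨r, hr, s, hs, rfl⟩ := Submodule.mem_sup.1 hu2
    obtain ⟨w, rfl⟩ := Ideal.mem_span_singleton'.1 hs
    refine ⟨m, w, ?_, by simpa using hr⟩
    by_contra hw
    refine hm (Submodule.add_mem_sup hr ?_)
    rw [pow_succ']
    refine Ideal.mul_mem_mul hw (Ideal.pow_mem_pow ?_ _)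
    exact hxy ▸ Ideal.subset_span (by simp)
  refine ⟨(hle.trans_lt (maximalIdeal.isMaximal Q).ne_top.lt_top).ne, ?_⟩
  intro u v huv
  by_contra! h
  obtain ⟨k, w, hw, hk⟩ := hform u h.1
  obtain ⟨l, w', hw', hl⟩ := hform v h.2
  refine hy (k + l) (((Ideal.span {x}).unit_mul_mem_iff_mem (hw.mul hw')).1 ?_)
  have e : w * w' * y ^ (k + l) = u * v - v * (u - w * y ^ k) - (w * y ^ k) * (v - w' * y ^ l) := by
    ring
  rw [e]
  exact sub_mem (sub_mem huv (Ideal.mul_mem_left _ _ hk)) (Ideal.mul_mem_left _ _ hl)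

/-- A regular local ring of dimension two is a domain. -/
lemma isDomain_of_dim_two (hdim : ringKrullDim Q = 2)
    (hreg : ∃ x y : Q, Ideal.span {x, y} = maximalIdeal Q) : IsDomain Q := by
  have hnm : ∀ P ∈ minimalPrimes Q, ¬ maximalIdeal Q ≤ P := by
    intro P hP h
    have hPp : P.IsPrime := hP.1.1
    rw [← le_antisymm h (IsLocalRing.le_maximalIdeal hPp.ne_top), ← Ideal.height_eq_zero_iff,
      height_maximalIdeal_eq_two hdim] at hP
    exact absurd hP (by decide)
  have h2 : ¬ maximalIdeal Q ≤ (maximalIdeal Q) ^ 2 := by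
    intro h
    have : maximalIdeal Q ≤ ⊥ := by
      refine Submodule.le_of_le_smul_of_le_jacobson_bot (I := maximalIdeal Q)
        (IsNoetherian.noetherian _) (IsLocalRing.maximalIdeal_le_jacobson _) ?_
      rw [bot_sup_eq, smul_eq_mul, ← pow_two]
      exact h
    exact not_pow_le_span_singleton hdim 0 (zero_mem _) 1 (by simpa using this)
  obtain ⟨x, hx, hx2, hxP⟩ : ∃ x ∈ maximalIdeal Q, x ∉ (maximalIdeal Q) ^ 2 ∧
      ∀ P ∈ minimalPrimes Q, x ∉ P := by
    by_contra! h
    have hsub : (maximalIdeal Q : Set Q) ⊆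
        ⋃ P ∈ insert ((maximalIdeal Q) ^ 2) (minimalPrimes Q), (P : Set Q) := by
      intro x hx
      by_cases hx2 : x ∈ (maximalIdeal Q) ^ 2
      · exact Set.mem_biUnion (Set.mem_insert _ _) hx2
      · obtain ⟨P, hP, hxP⟩ := h x hx hx2
        exact Set.mem_biUnion (Set.mem_insert_of_mem _ hP) hxP
    obtain ⟨P, hP, hle⟩ := (Ideal.subset_union_prime_finite
      ((minimalPrimes.finite_of_isNoetherianRing Q).insert _)
      ((maximalIdeal Q) ^ 2) ((maximalIdeal Q) ^ 2)
      (fun P hP hne _ => (hP.resolve_left hne).1.1)).1 hsub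
    rcases hP with rfl | hP
    · exact h2 hle
    · exact hnm P hP hle
  obtain ⟨y, hxy⟩ := exists_span_pair_eq hreg hx hx2
  have hpr := isPrime_span_singleton hdim hxy
  obtain ⟨P, hP, hPx⟩ := Ideal.exists_minimalPrimes_le (bot_le : ⊥ ≤ Ideal.span {x})
  have hPp : P.IsPrime := hP.1.1
  have hPbot : P ≤ ⊥ := by
    refine Submodule.le_of_le_smul_of_le_jacobson_bot (I := maximalIdeal Q)
      (IsNoetherian.noetherian _) (IsLocalRing.maximalIdeal_le_jacobson _) ?_
    rw [bot_sup_eq, smul_eq_mul]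
    intro p hp
    obtain ⟨r, rfl⟩ := Ideal.mem_span_singleton'.1 (hPx hp)
    rw [mul_comm r]
    exact Ideal.mul_mem_mul hx ((hPp.mem_or_mem hp).resolve_right (hxP P hP))
  rw [le_bot_iff] at hPbot
  subst hPbot
  exact IsDomain.of_bot_isPrime Q

/-- The socle of `Q / (f)` vanishes, that is, `Q / (f)` has positive depth. -/
lemma mem_span_of_forall_mul_mem (hdim : ringKrullDim Q = 2)
    (hreg : ∃ x y : Q, Ideal.span {x, y} = maximalIdeal Q) {f u : Q}
    (h : ∀ z ∈ maximalIdeal Q, z * u ∈ Ideal.span {f}) : u ∈ Ideal.span {f} := by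
  have := isDomain_of_dim_two hdim hreg
  obtain ⟨x, y, hxy⟩ := hreg
  have hx : x ∈ maximalIdeal Q := hxy ▸ Ideal.subset_span (by simp)
  have hy : y ∈ maximalIdeal Q := hxy ▸ Ideal.subset_span (by simp)
  have hpr := isPrime_span_singleton hdim hxy
  have hyx : y ∉ Ideal.span {x} := by
    intro hyx
    refine not_pow_le_span_singleton hdim x hx 1 ?_
    rw [pow_one, ← hxy, Ideal.span_le]
    rintro z (rfl | rfl)
    · exact Ideal.subset_span rfl
    · exact hyx
  have hx0 : x ≠ 0 := by
    rintro rfl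
    refine not_pow_le_span_singleton hdim y hy 1 ?_
    rw [pow_one, ← hxy, Ideal.span_insert_zero]
  obtain ⟨p, hp⟩ := Ideal.mem_span_singleton'.1 (h x hx)
  obtain ⟨q, hq⟩ := Ideal.mem_span_singleton'.1 (h y hy)
  rcases eq_or_ne f 0 with rfl | hf
  · have : x * u = 0 := by rw [← hp, mul_zero]
    rw [(mul_eq_zero.1 this).resolve_left hx0]
    exact zero_mem _
  have e : p * y = q * x := mul_right_cancel₀ hf (by linear_combination y * hp - x * hq)
  have hpx : p ∈ Ideal.span {x} :=
    (hpr.mem_or_mem (e ▸ Ideal.mul_mem_left _ _ (Ideal.subset_span rfl))).resolve_right hyx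
  obtain ⟨r, rfl⟩ := Ideal.mem_span_singleton'.1 hpx
  exact Ideal.mem_span_singleton'.2 ⟨r, mul_left_cancel₀ hx0 (by linear_combination hp)⟩

lemma mem_span_of_forall_pow_mul_mem (hdim : ringKrullDim Q = 2)
    (hreg : ∃ x y : Q, Ideal.span {x, y} = maximalIdeal Q) {f : Q} (k : ℕ) :
    ∀ u : Q, (∀ z ∈ (maximalIdeal Q) ^ k, z * u ∈ Ideal.span {f}) → u ∈ Ideal.span {f} := by
  induction k with
  | zero => exact fun u h => by simpa using h 1 (by simp)
  | succ k ih =>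
    refine fun u h => ih u fun z hz => mem_span_of_forall_mul_mem hdim hreg fun w hw => ?_
    rw [← mul_assoc]
    exact h _ (by rw [pow_succ']; exact Ideal.mul_mem_mul hw hz)

/-- If `f ∈ n²` then no positive power of the maximal ideal of `Q / (f)` is principal: a principal
power would be generated by a nonzerodivisor, making the maximal ideal invertible, hence
principal. -/
lemma not_pow_le_span_pair (hdim : ringKrullDim Q = 2)
    (hreg : ∃ x y : Q, Ideal.span {x, y} = maximalIdeal Q) {f g : Q} {i : ℕ}
    (hf : f ∈ (maximalIdeal Q) ^ 2) (hg : g ∈ (maximalIdeal Q) ^ (i + 1)) :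
    ¬ (maximalIdeal Q) ^ (i + 1) ≤ Ideal.span {f, g} := by
  intro hle
  -- `g` is a nonzerodivisor modulo `f`
  have hreg_g : ∀ u, g * u ∈ Ideal.span {f} → u ∈ Ideal.span {f} := by
    refine fun u hu => mem_span_of_forall_pow_mul_mem hdim hreg (i + 1) u fun z hz => ?_
    obtain ⟨r, s, rfl⟩ := Ideal.mem_span_pair.1 (hle hz)
    have e : (r * f + s * g) * u = r * u * f + s * (g * u) := by ring
    rw [e]
    exact add_mem (Ideal.mul_mem_left _ _ (Ideal.subset_span rfl)) (Ideal.mul_mem_left _ _ hu)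
  have hf1 : f ∈ maximalIdeal Q := Ideal.pow_le_self two_ne_zero hf
  -- some product `a * b` generates `n ^ (i + 1)` modulo `f`
  obtain ⟨a, ha, b, hb, r, s, hs, hab⟩ : ∃ a ∈ maximalIdeal Q, ∃ b ∈ (maximalIdeal Q) ^ i,
      ∃ r s : Q, IsUnit s ∧ r * f + s * g = a * b := by
    by_contra! h
    have hmem : g ∈ Ideal.span {f} ⊔ maximalIdeal Q * Ideal.span {g} := by
      have hle2 : (maximalIdeal Q) ^ (i + 1) ≤
          Ideal.span {f} ⊔ maximalIdeal Q * Ideal.span {g} := by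
        rw [pow_succ', Ideal.mul_le]
        intro a ha b hb
        obtain ⟨r, s, hrs⟩ := Ideal.mem_span_pair.1
          (hle (by rw [pow_succ']; exact Ideal.mul_mem_mul ha hb))
        rw [← hrs]
        refine Submodule.add_mem_sup (Ideal.mul_mem_left _ _ (Ideal.subset_span rfl))
          (Ideal.mul_mem_mul ?_ (Ideal.subset_span rfl))
        exact fun hs => h a ha b hb r s hs hrs
      exact hle2 hg
    have hgf : Ideal.span {g} ≤ Ideal.span {f} :=
      Submodule.le_of_le_smul_of_le_jacobson_bot (I := maximalIdeal Q)
        (IsNoetherian.noetherian _) (IsLocalRing.maximalIdeal_le_jacobson _)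
        ((Ideal.span_singleton_le_iff_mem _).2 hmem)
    have h1 : (1 : Q) ∈ Ideal.span {f} :=
      hreg_g 1 (by rw [mul_one]; exact hgf (Ideal.subset_span rfl))
    exact (maximalIdeal.isMaximal Q).ne_top ((Ideal.eq_top_iff_one _).2
      ((Ideal.span_singleton_le_iff_mem _).2 hf1 h1))
  obtain ⟨t, ht⟩ := hs.exists_left_inv
  have hreg_b : ∀ u, b * u ∈ Ideal.span {f} → u ∈ Ideal.span {f} := by
    refine fun u hu => hreg_g u ?_
    have e : g * u = t * a * (b * u) - t * r * u * f := by
      linear_combination (-(g * u)) * ht + t * u * hab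
    rw [e]
    exact sub_mem (Ideal.mul_mem_left _ _ hu) (Ideal.mul_mem_left _ _ (Ideal.subset_span rfl))
  -- cancelling `b` in `n * b ⊆ (f, a * b)` gives `n = (f, a)`
  have hn : maximalIdeal Q ≤ Ideal.span {a} ⊔ maximalIdeal Q • maximalIdeal Q := by
    intro z hz
    obtain ⟨r', s', hzb⟩ := Ideal.mem_span_pair.1
      (hle (by rw [pow_succ']; exact Ideal.mul_mem_mul hz hb))
    have hmem : z - s' * t * a ∈ Ideal.span {f} := by
      refine hreg_b _ (Ideal.mem_span_singleton'.2 ⟨r' - s' * t * r, ?_⟩)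
      linear_combination hzb - s' * t * hab + s' * g * ht
    have hmem2 : z - s' * t * a ∈ maximalIdeal Q • maximalIdeal Q := by
      rw [smul_eq_mul, ← pow_two]
      exact (Ideal.span_singleton_le_iff_mem _).2 hf hmem
    have e : z = s' * t * a + (z - s' * t * a) := by ring
    rw [e]
    exact Submodule.add_mem_sup (Ideal.mul_mem_left _ _ (Ideal.subset_span rfl)) hmem2
  refine not_pow_le_span_singleton hdim a ha 1 ?_
  rw [pow_one]
  exact Submodule.le_of_le_smul_of_le_jacobson_bot
    (IsNoetherian.noetherian _) (IsLocalRing.maximalIdeal_le_jacobson _) hn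

end TwoDim

/-- Let `(Q, n)` be a regular local ring of embedding dimension `2` (a commutative
Noetherian local ring of Krull dimension `2` whose maximal ideal `n` is generated
by two elements, which is equivalent to being regular of embedding dimension `2`),
let `J ⊆ n²` be an ideal and let `i ≥ 3` be such that `n^i ⊄ J`.  Then the ideal
`J + n^i` cannot be generated by two elements. -/
theorem stmt0 (Q : Type*) [CommRing Q] [IsLocalRing Q] [IsNoetherianRing Q]
    (hdim : ringKrullDim Q = 2)
    (hreg : ∃ x y : Q, Ideal.span {x, y} = maximalIdeal Q)
    (J : Ideal Q) (hJ : J ≤ (maximalIdeal Q) ^ 2)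
    (i : ℕ) (hi : 3 ≤ i)
    (hni : ¬ (maximalIdeal Q) ^ i ≤ J) :
    ¬ ∃ a b : Q, Ideal.span {a, b} = J + (maximalIdeal Q) ^ i := by
  rintro ⟨a, b, hab⟩
  obtain ⟨i, rfl⟩ : ∃ k, i = k + 1 := ⟨i - 1, by omega⟩
  rw [Submodule.add_eq_sup] at hab
  set I := J ⊔ (maximalIdeal Q) ^ (i + 1) with hI
  have haI : a ∈ I := hab ▸ Ideal.subset_span (by simp)
  have hbI : b ∈ I := hab ▸ Ideal.subset_span (by simp)
  have nak : ∀ N : Ideal Q, I ≤ N ⊔ maximalIdeal Q • I → I ≤ N := fun N h =>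
    Submodule.le_of_le_smul_of_le_jacobson_bot
      (IsNoetherian.noetherian _) (IsLocalRing.maximalIdeal_le_jacobson _) h
  by_cases hJI : J ≤ maximalIdeal Q • I
  · -- here `I = n ^ (i + 1)`, and any two generators will do
    have hIn : I ≤ (maximalIdeal Q) ^ (i + 1) :=
      nak _ (sup_le (hJI.trans le_sup_right) le_sup_left)
    refine not_pow_le_span_pair hdim hreg (Ideal.pow_le_pow_right (by omega) (hIn haI)) (hIn hbI) ?_
    rw [hab]
    exact le_sup_right
  obtain ⟨f, hfJ, hfI⟩ := SetLike.not_le_iff_exists.1 hJI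
  have hnJ : ¬ (maximalIdeal Q) ^ (i + 1) ≤ J ⊔ maximalIdeal Q • I := fun h =>
    hni (le_sup_right.trans (nak J (sup_le le_sup_left h)))
  obtain ⟨g, hgn, hgJ⟩ := SetLike.not_le_iff_exists.1 hnJ
  have key : ∀ a b : Q, Ideal.span {a, b} = I → b ∈ I → ∀ p q, IsUnit p → p * a + q * b = f →
      False := by
    intro a b hab hbI p q hp hpq
    have h1 : I ≤ Ideal.span {f, b} := hab ▸ span_pair_le_of_isUnit hp hpq
    obtain ⟨r, s, hrs⟩ := Ideal.mem_span_pair.1 (h1 (le_sup_right (a := J) hgn))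
    have hs : IsUnit s := by
      by_contra hs
      refine hgJ ?_
      rw [← hrs]
      exact Submodule.add_mem_sup (Ideal.mul_mem_left _ _ hfJ) (Ideal.mul_mem_mul hs hbI)
    have h2 : Ideal.span {b, f} ≤ Ideal.span {g, f} :=
      span_pair_le_of_isUnit hs (by rw [← hrs, add_comm])
    rw [Set.pair_comm b f, Set.pair_comm g f] at h2
    exact not_pow_le_span_pair hdim hreg (hJ hfJ) hgn (le_sup_right.trans (h1.trans h2))
  obtain ⟨p, q, hpq⟩ := Ideal.mem_span_pair.1
    (by rw [hab]; exact (le_sup_left : J ≤ I) hfJ : f ∈ Ideal.span {a, b})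
  by_cases hp : IsUnit p
  · exact key a b hab hbI p q hp hpq
  by_cases hq : IsUnit q
  · exact key b a (by rw [Set.pair_comm, hab]) haI q p hq (by rw [← hpq, add_comm])
  refine hfI ?_
  rw [← hpq]
  exact add_mem (Ideal.mul_mem_mul hp haI) (Ideal.mul_mem_mul hq hbI)
end

section
/- Let (Q, n) be a regular local ring of embedding dimension 3, let f, g, h ∈ n² be a Q-regular sequence, and set I = (f,g,h). Suppose ℓ, ℓ', ℓ'' ∈ n \ n² and u ∈ n² satisfy ℓℓ' ∈ I and ℓ(ℓ'' − u) ∈ I. Then there is a unit v ∈ Q such that ℓ'' − vℓ' ∈ n²; in other words, the images of ℓ' and ℓ'' in n/n² are linearly dependent over the residue field. -/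
/-! Write `n` for the maximal ideal and `I = (f,g,h)`. Write `ℓℓ' = b₁f + b₂g + b₃h` and
`ℓ(ℓ'' - u) = c₁f + c₂g + c₃h`. Multiplying crosswise, the elements `(ℓ'' - u)bᵢ - ℓ'cᵢ` are the
coefficients of a syzygy of `f, g, h`, so they lie in `I ⊆ n²` (`IsRegularSeq3.syzygy`).

If some `bᵢ` is a unit, dividing by it gives `ℓ'' ≡ (cᵢ/bᵢ)ℓ'` modulo `n²`, and `cᵢ/bᵢ` is a unit
since `ℓ'' ∉ n²`. Otherwise all `bᵢ ∈ n`, so `ℓℓ' ∈ nI ⊆ n³`. This is impossible since the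
associated graded ring of a regular local ring is a domain; only the degree-one case is needed,
and it is `mem_sq_of_mul_mem_cube`. That lemma rests on the fact that regular local rings are
domains (`dom_of_regular`). -/

open IsLocalRing

/-- `f, g, h` is a `Q`-regular sequence: each element is a nonzerodivisor modulo the
ideal generated by the preceding ones, and `(f,g,h) ≠ Q`. -/
def IsRegularSeq3 {Q : Type*} [CommRing Q] (f g h : Q) : Prop :=
  (∀ x : Q, f * x = 0 → x = 0) ∧
  (∀ x : Q, g * x ∈ Ideal.span {f} → x ∈ Ideal.span {f}) ∧
  (∀ x : Q, h * x ∈ Ideal.span {f, g} → x ∈ Ideal.span {f, g}) ∧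
  Ideal.span {f, g, h} ≠ (⊤ : Ideal Q)

/-! ### Regular local rings are domains -/

section LocalAlgebra

variable {R : Type*} [CommRing R] [IsLocalRing R]

/-- Exchange: an element of `n \ n²` can replace one member of a finite generating family
of `n`, namely any member occurring in it with a unit coefficient. -/
theorem exchange {d : ℕ} (a : Fin (d + 1) → R)
    (ha : Ideal.span (Set.range a) = maximalIdeal R) {x : R} (hx : x ∈ maximalIdeal R)
    (hx2 : x ∉ maximalIdeal R ^ 2) :
    ∃ b : Fin d → R, Ideal.span (insert x (Set.range b)) = maximalIdeal R := by
  have ham : ∀ i, a i ∈ maximalIdeal R := fun i => ha ▸ Ideal.subset_span ⟨i, rfl⟩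
  obtain ⟨r, hr⟩ := Ideal.mem_span_range_iff_exists_fun.1 (ha ▸ hx)
  obtain ⟨i, hi⟩ : ∃ i, IsUnit (r i) := by
    by_contra! hcon
    refine hx2 (hr ▸ Ideal.sum_mem _ fun i _ => ?_)
    rw [pow_two]
    exact Ideal.mul_mem_mul ((mem_maximalIdeal _).2 (hcon i)) (ham i)
  refine ⟨fun j => a (i.succAbove j), le_antisymm ?_ ?_⟩
  · rw [Ideal.span_le]
    rintro _ (rfl | ⟨j, rfl⟩)
    exacts [hx, ham _]
  · rw [← ha, Ideal.span_le]
    rintro _ ⟨k, rfl⟩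
    have key : ∀ j, a (i.succAbove j) ∈
        Ideal.span (insert x (Set.range fun j => a (i.succAbove j))) :=
      fun j => Ideal.subset_span (Or.inr ⟨j, rfl⟩)
    rcases Fin.eq_self_or_eq_succAbove i k with rfl | ⟨j, rfl⟩
    · rw [Fin.sum_univ_succAbove _ k] at hr
      refine (Ideal.unit_mul_mem_iff_mem _ hi).1 ?_
      rw [eq_sub_of_add_eq hr]
      exact Ideal.sub_mem _ (Ideal.subset_span (Or.inl rfl))
        (Ideal.sum_mem _ fun j _ => Ideal.mul_mem_left _ _ (key j))
    · exact key j

variable [IsNoetherianRing R]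

theorem dim_le {d : ℕ} (a : Fin d → R)
    (ha : Ideal.span (Set.range a) = maximalIdeal R) : ringKrullDim R ≤ d := by
  refine (ringKrullDim_le_spanFinrank_maximalIdeal R).trans ?_
  rw [← ha]
  have h1 := Submodule.spanFinrank_span_le_ncard_of_finite (R := R) (Set.finite_range a)
  have h2 : (Set.range a).ncard ≤ d := by
    simpa [Set.image_univ] using Set.ncard_image_le (f := a) (Set.finite_univ)
  exact_mod_cast h1.trans h2

theorem le_dim_quot {d : ℕ} (hd : ((d + 1 : ℕ) : WithBot ℕ∞) ≤ ringKrullDim R) {x : R}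
    (hx : x ∈ maximalIdeal R) : (d : WithBot ℕ∞) ≤ ringKrullDim (R ⧸ Ideal.span {x}) := by
  have h := ringKrullDim_le_ringKrullDim_quotient_add_card (R := R) {x}
    (by simpa [IsLocalRing.ringJacobson_eq_maximalIdeal] using hx)
  rw [Finset.coe_singleton, Finset.card_singleton] at h
  have h2 := hd.trans h
  push_cast at h2
  exact (ENat.WithBot.add_le_add_one_right_iff).1 h2

omit [IsNoetherianRing R] in
/-- The maximal ideal of `R/(x)` is generated by the images of the remaining generators. -/
theorem span_mk {d : ℕ} (b : Fin d → R) {x : R} [IsLocalRing (R ⧸ Ideal.span {x})]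
    (hb : Ideal.span (insert x (Set.range b)) = maximalIdeal R) :
    Ideal.span (Set.range fun i => Ideal.Quotient.mk (Ideal.span {x}) (b i)) =
      maximalIdeal (R ⧸ Ideal.span {x}) := by
  rw [← map_maximalIdeal_of_surjective _ Ideal.Quotient.mk_surjective, ← hb, Ideal.map_span,
    Set.image_insert_eq, Ideal.Quotient.eq_zero_iff_mem.2 (Ideal.mem_span_singleton_self x),
    Ideal.span_insert_zero, ← Set.range_comp]
  rfl

omit [IsNoetherianRing R] in
theorem local_quot {x : R} (hx : x ∈ maximalIdeal R) : IsLocalRing (R ⧸ Ideal.span {x}) := by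
  have : Nontrivial (R ⧸ Ideal.span {x}) := Ideal.Quotient.nontrivial_iff.2 fun h =>
    (maximalIdeal.isMaximal R).ne_top
      (top_le_iff.1 (h ▸ (Ideal.span_singleton_le_iff_mem _).2 hx))
  exact .of_surjective' _ Ideal.Quotient.mk_surjective

universe w

/-- A regular local ring is a domain, by induction on the dimension `d`. Prime avoidance gives
`x ∈ n \ n²` outside all minimal primes; `R/(x)` is a domain by induction, so `(x)` is prime and
contains a minimal prime `P`. As `x ∉ P`, `P = xP`, hence `P = 0` by Nakayama. -/
theorem dom_of_regular (d : ℕ) : ∀ (R : Type w) [CommRing R] [IsLocalRing R] [IsNoetherianRing R]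
    (a : Fin d → R), Ideal.span (Set.range a) = maximalIdeal R →
    (d : WithBot ℕ∞) ≤ ringKrullDim R → IsDomain R := by
  induction d with
  | zero =>
    intro R _ _ _ a ha _
    have h : IsField R := isField_iff_maximalIdeal_eq.2 (by simpa using ha.symm)
    exact h.isDomain
  | succ d ih =>
    intro R _ _ _ a ha hd
    have hpos : ∀ P ∈ minimalPrimes R, ¬ maximalIdeal R ≤ P := by
      intro P hP hle
      have hPp : P.IsPrime := hP.1.1
      have hPe : P = maximalIdeal R := le_antisymm (le_maximalIdeal hPp.ne_top) hle
      rw [hPe, ← Ideal.height_eq_zero_iff] at hP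
      rw [← maximalIdeal_height_eq_ringKrullDim, hP] at hd
      have hd' : ((d + 1 : ℕ) : ℕ∞) ≤ 0 := by exact_mod_cast hd
      simp at hd'
    obtain ⟨P₀, hP₀⟩ := Ideal.nonempty_minimalPrimes (I := (⊥ : Ideal R)) bot_ne_top
    have hsq : ¬ maximalIdeal R ≤ maximalIdeal R ^ 2 := by
      intro hle
      have h0 : maximalIdeal R = ⊥ := Submodule.eq_bot_of_le_smul_of_le_jacobson_bot
        (maximalIdeal R) (maximalIdeal R) (IsNoetherian.noetherian _)
        (by rwa [smul_eq_mul, ← pow_two]) (maximalIdeal_le_jacobson _)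
      exact hpos P₀ hP₀ (h0 ▸ bot_le)
    obtain ⟨x, hx, hx2, hxP⟩ : ∃ x ∈ maximalIdeal R, x ∉ maximalIdeal R ^ 2 ∧
        ∀ P ∈ minimalPrimes R, x ∉ P := by
      by_contra! hcon
      have hfin : (insert (maximalIdeal R ^ 2) (minimalPrimes R)).Finite :=
        (minimalPrimes.finite_of_isNoetherianRing R).insert _
      obtain ⟨P, hP, hle⟩ := (Ideal.subset_union_prime_finite (I := maximalIdeal R) hfin (f := id)
        (maximalIdeal R ^ 2) (maximalIdeal R ^ 2) (by
          rintro P (rfl | hP) h1 _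
          · exact absurd rfl h1
          · exact hP.1.1)).1 (by
          intro x hx
          simp only [Set.mem_iUnion]
          by_cases h2 : x ∈ maximalIdeal R ^ 2
          · exact ⟨_, Or.inl rfl, h2⟩
          · obtain ⟨P, hP, hxP⟩ := hcon x hx h2
            exact ⟨P, Or.inr hP, hxP⟩)
      rcases hP with rfl | hP
      exacts [hsq hle, hpos P hP hle]
    obtain ⟨b, hb⟩ := exchange a ha hx hx2
    have := local_quot hx
    have hprime : (Ideal.span {x}).IsPrime := (Ideal.Quotient.isDomain_iff_prime _).1
      (ih _ _ (span_mk b hb) (le_dim_quot hd hx))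
    obtain ⟨P, hP, hPx⟩ := Ideal.exists_minimalPrimes_le (bot_le : ⊥ ≤ Ideal.span {x})
    have hPp : P.IsPrime := hP.1.1
    have hP0 : P = ⊥ := by
      refine Submodule.eq_bot_of_le_smul_of_le_jacobson_bot (maximalIdeal R) P
        (IsNoetherian.noetherian _) (fun p hp => ?_) (maximalIdeal_le_jacobson _)
      obtain ⟨q, rfl⟩ := Ideal.mem_span_singleton.1 (hPx hp)
      exact Ideal.mul_mem_mul hx ((hPp.mem_or_mem hp).resolve_left (hxP P hP))
    rw [hP0] at hPp
    exact IsDomain.of_bot_isPrime R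

/-! ### Products of elements of order one in dimension three -/

/-- For `J = (x,y,z)`, `J^(k+1) = x J^k + y J^k + (z^(k+1))`. Only the inclusion `⊆` is
stated. -/
theorem mem_pow_succ {R : Type*} [CommRing R] {x y z : R} (k : ℕ) :
    ∀ v ∈ Ideal.span {x, y, z} ^ (k + 1), ∃ s ∈ Ideal.span {x, y, z} ^ k,
      ∃ t ∈ Ideal.span {x, y, z} ^ k, ∃ c, v = x * s + y * t + c * z ^ (k + 1) := by
  induction k with
  | zero =>
    intro v hv
    rw [zero_add, pow_one] at hv
    obtain ⟨a, b, c, rfl⟩ := Submodule.mem_span_triple.1 hv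
    exact ⟨a, by simp, b, by simp, c, by simp only [smul_eq_mul]; ring⟩
  | succ k ih =>
    intro v hv
    rw [pow_succ'] at hv
    induction hv using Submodule.mul_induction_on' with
    | mem_mul_mem m hm v hv =>
      obtain ⟨s, hs, t, ht, c, hc⟩ := ih v hv
      obtain ⟨a, b, g, rfl⟩ := Submodule.mem_span_triple.1 hm
      have hz : z ∈ Ideal.span {x, y, z} := Ideal.subset_span (by simp)
      refine ⟨a * v + g * (z * s), ?_, b * v + g * (z * t), ?_, g * c, ?_⟩
      · exact add_mem (Ideal.mul_mem_left _ _ hv)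
          (Ideal.mul_mem_left _ _ (pow_succ' (Ideal.span {x, y, z}) k ▸ Ideal.mul_mem_mul hz hs))
      · exact add_mem (Ideal.mul_mem_left _ _ hv)
          (Ideal.mul_mem_left _ _ (pow_succ' (Ideal.span {x, y, z}) k ▸ Ideal.mul_mem_mul hz ht))
      · simp only [smul_eq_mul]
        linear_combination g * z * hc
    | add v _ w _ hv hw =>
      obtain ⟨s, hs, t, ht, c, rfl⟩ := hv
      obtain ⟨s', hs', t', ht', k₂, rfl⟩ := hw
      exact ⟨s + s', add_mem hs hs', t + t', add_mem ht ht', c + k₂, by ring⟩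

/-- In a regular local ring of dimension `3`, if `x ∈ n \ n²` and `xw ∈ n³` then `w ∈ n²`;
in particular the associated graded ring has no zero divisors in degree one. With `n = (x,y,z)`, the
proof uses that `x, y, z` is a regular sequence (`R`, `R/(x)` and `R/(x,y)` being domains):
write `xw = xs + yt + cz³` with `s, t ∈ n²`, reduce modulo `(x,y)` to eliminate `c`, and modulo
`x` to eliminate `t`. -/
theorem mem_sq_of_mul_mem_cube (hdim : ringKrullDim R = 3)
    (hreg : ∃ x y z : R, Ideal.span {x, y, z} = maximalIdeal R) {x w : R}
    (hx : x ∈ maximalIdeal R) (hx2 : x ∉ maximalIdeal R ^ 2)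
    (hxw : x * w ∈ maximalIdeal R ^ 3) : w ∈ maximalIdeal R ^ 2 := by
  obtain ⟨a₀, a₁, a₂, ha⟩ := hreg
  have ha' : Ideal.span (Set.range ![a₀, a₁, a₂]) = maximalIdeal R := by
    rw [← ha]; congr 1; ext r; simp only [Matrix.range_cons, Matrix.range_empty]; simp; tauto
  have hd : ((2 + 1 : ℕ) : WithBot ℕ∞) ≤ ringKrullDim R := by rw [hdim]; rfl
  have hR : IsDomain R := dom_of_regular 3 R _ ha' hd
  obtain ⟨b, hb⟩ := exchange _ ha' hx hx2
  have hx0 : x ≠ 0 := fun h => hx2 (h ▸ zero_mem _)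
  have := local_quot hx
  set A := R ⧸ Ideal.span {x}
  let π : R →+* A := Ideal.Quotient.mk (Ideal.span {x})
  have hdA : ((1 + 1 : ℕ) : WithBot ℕ∞) ≤ ringKrullDim A := le_dim_quot hd hx
  have hbA := span_mk b hb
  have hA : IsDomain A := dom_of_regular 2 A _ hbA hdA
  obtain ⟨y, hy⟩ : ∃ y, y = b 0 := ⟨_, rfl⟩
  obtain ⟨z, hz⟩ : ∃ z, z = b 1 := ⟨_, rfl⟩
  have hspan : Ideal.span {x, y, z} = maximalIdeal R := by
    rw [← hb, hy, hz]; congr 1; ext r; simp [Fin.exists_fin_two, eq_comm]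
  have hspanA : Ideal.span {π y, π z} = maximalIdeal A := by
    rw [← hbA, hy, hz]; congr 1; ext r; simp [Fin.exists_fin_two, eq_comm, π]
  -- `n_A` is not principal, as `dim A ≥ 2`.
  have hsmall : ∀ r : A, Ideal.span {r} ≠ maximalIdeal A := fun r hr => by
    have h1 := hdA.trans (dim_le ![r] (by simpa using hr))
    have h2 : ((1 + 1 : ℕ) : ℕ∞) ≤ (1 : ℕ) := by exact_mod_cast h1
    exact absurd h2 (by decide)
  have hy0 : π y ≠ 0 := fun h => hsmall (π z) (by rw [← hspanA, h, Ideal.span_insert_zero])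
  have hz0 : π z ∉ Ideal.span {π y} := fun h => hsmall (π y) (by
    rw [← hspanA, Set.pair_comm, Ideal.span_insert, sup_eq_right.2]
    exact (Ideal.span_singleton_le_iff_mem _).2 h)
  have hyA : π y ∈ maximalIdeal A := hspanA ▸ Ideal.subset_span (by simp)
  have := local_quot hyA
  have hyprime : (Ideal.span {π y}).IsPrime := (Ideal.Quotient.isDomain_iff_prime _).1
    (dom_of_regular 1 _ _ (span_mk ![π z] (by simpa using hspanA)) (le_dim_quot hdA hyA))
  rw [← hspan] at hxw
  obtain ⟨s, hs, t, ht, c, hc⟩ := mem_pow_succ 2 _ hxw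
  rw [hspan] at hs ht
  have hπx : π x = 0 := Ideal.Quotient.eq_zero_iff_mem.2 (Ideal.mem_span_singleton_self x)
  -- Modulo `(x,y)` the relation reads `cz³ = 0`, in a domain where `z ≠ 0`.
  have hc1 : π c ∈ Ideal.span {π y} := by
    refine (hyprime.mem_or_mem (y := π z ^ 3) ?_).resolve_right
      fun h => hz0 (hyprime.mem_of_pow_mem _ h)
    have h := congrArg π hc
    simp only [map_add, map_mul, map_pow, hπx] at h
    exact Ideal.mem_span_singleton.2 ⟨-π t, by linear_combination -h⟩
  obtain ⟨e', he'⟩ := Ideal.mem_span_singleton.1 hc1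
  obtain ⟨e, rfl⟩ := Ideal.Quotient.mk_surjective e'
  obtain ⟨d, hd⟩ := Ideal.mem_span_singleton.1
    ((Ideal.Quotient.mk_eq_mk_iff_sub_mem c (y * e)).1 (by rw [map_mul]; exact he'))
  have hq0 : π (t + e * z ^ 3) = 0 := by
    refine (mul_eq_zero.1 ?_).resolve_left hy0
    rw [← map_mul, show y * (t + e * z ^ 3) = x * (w - s - d * z ^ 3) by
      linear_combination -z ^ 3 * hd - hc, map_mul, hπx, zero_mul]
  obtain ⟨q, hq⟩ := Ideal.mem_span_singleton.1 (Ideal.Quotient.eq_zero_iff_mem.1 hq0)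
  have hw : w = s + d * z ^ 3 + y * q := mul_left_cancel₀ hx0 (by
    linear_combination hc + y * hq + z ^ 3 * hd)
  have hym : y ∈ maximalIdeal R := hspan ▸ Ideal.subset_span (by simp)
  have hzm : z ∈ maximalIdeal R := hspan ▸ Ideal.subset_span (by simp)
  have hz3 : z ^ 3 ∈ maximalIdeal R ^ 2 :=
    Ideal.pow_le_pow_right (by norm_num) (Ideal.pow_mem_pow hzm 3)
  -- `xq = t + ez³ ∈ n²` while `x ∉ n²`, so `q` is not a unit.
  have hqm : q ∈ maximalIdeal R := by
    by_contra hq'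
    have hu : IsUnit q := by simpa using hq'
    refine hx2 ((Ideal.unit_mul_mem_iff_mem _ hu).1 ?_)
    rw [mul_comm, ← hq]
    exact add_mem ht (Ideal.mul_mem_left _ _ hz3)
  rw [hw]
  exact add_mem (add_mem hs (Ideal.mul_mem_left _ _ hz3))
    (pow_two (maximalIdeal R) ▸ Ideal.mul_mem_mul hym hqm)

end LocalAlgebra

/-! ### Syzygies of a regular sequence -/

/-- The coefficients of a syzygy of a regular sequence lie in the ideal the sequence
generates. -/
theorem IsRegularSeq3.syzygy {Q : Type*} [CommRing Q] {f g h : Q} (H : IsRegularSeq3 f g h)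
    {a b c : Q} (habc : a * f + b * g + c * h = 0) :
    a ∈ Ideal.span {f, g, h} ∧ b ∈ Ideal.span {f, g, h} ∧ c ∈ Ideal.span {f, g, h} := by
  obtain ⟨hf, hg, hh, -⟩ := H
  obtain ⟨p, q, hpq⟩ := Ideal.mem_span_pair.1
    (hh c (Ideal.mem_span_pair.2 ⟨-a, -b, by linear_combination -habc⟩))
  obtain ⟨r, hr⟩ := Ideal.mem_span_singleton'.1 (hg (b + q * h)
    (Ideal.mem_span_singleton'.2 ⟨-a - p * h, by linear_combination -habc - h * hpq⟩))
  have hfz := hf (a + p * h + r * g) (by linear_combination habc + g * hr + h * hpq)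
  refine ⟨Submodule.mem_span_triple.2 ⟨0, -r, -p, ?_⟩, Submodule.mem_span_triple.2 ⟨r, 0, -q, ?_⟩,
    Submodule.mem_span_triple.2 ⟨p, q, 0, ?_⟩⟩ <;> simp only [smul_eq_mul]
  · linear_combination -hfz
  · linear_combination hr
  · linear_combination hpq

/-- Let `(Q, n)` be a regular local ring of embedding dimension `3`, let `f, g, h ∈ n²`
be a `Q`-regular sequence and set `I = (f,g,h)`.  Suppose `ℓ, ℓ', ℓ'' ∈ n \ n²` and
`u ∈ n²` satisfy `ℓℓ' ∈ I` and `ℓ(ℓ'' − u) ∈ I`.  Then there is a unit `v ∈ Q` with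
`ℓ'' − vℓ' ∈ n²`, i.e. the images of `ℓ'` and `ℓ''` in `n/n²` are linearly
dependent over the residue field. -/
theorem stmt10 (Q : Type*) [CommRing Q] [IsLocalRing Q] [IsNoetherianRing Q]
    (hdim : ringKrullDim Q = 3)
    (hreg : ∃ x y z : Q, Ideal.span {x, y, z} = maximalIdeal Q)
    (f g h : Q) (hf : f ∈ (maximalIdeal Q) ^ 2) (hg : g ∈ (maximalIdeal Q) ^ 2)
    (hh : h ∈ (maximalIdeal Q) ^ 2) (hfgh : IsRegularSeq3 f g h)
    (l l' l'' u : Q)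
    (hl : l ∈ maximalIdeal Q) (hl2 : l ∉ (maximalIdeal Q) ^ 2)
    (hl' : l' ∈ maximalIdeal Q) (hl'2 : l' ∉ (maximalIdeal Q) ^ 2)
    (hl'' : l'' ∈ maximalIdeal Q) (hl''2 : l'' ∉ (maximalIdeal Q) ^ 2)
    (hu : u ∈ (maximalIdeal Q) ^ 2)
    (hll' : l * l' ∈ Ideal.span {f, g, h})
    (hll'' : l * (l'' - u) ∈ Ideal.span {f, g, h}) :
    ∃ v : Q, IsUnit v ∧ l'' - v * l' ∈ (maximalIdeal Q) ^ 2 := by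
  have hI : Ideal.span {f, g, h} ≤ maximalIdeal Q ^ 2 := by
    rw [Ideal.span_le]
    rintro _ (rfl | rfl | rfl) <;> assumption
  obtain ⟨b₁, b₂, b₃, hb⟩ := Submodule.mem_span_triple.1 hll'
  obtain ⟨c₁, c₂, c₃, hc⟩ := Submodule.mem_span_triple.1 hll''
  simp only [smul_eq_mul] at hb hc
  obtain ⟨h₁, h₂, h₃⟩ := hfgh.syzygy (a := (l'' - u) * b₁ - l' * c₁)
    (b := (l'' - u) * b₂ - l' * c₂) (c := (l'' - u) * b₃ - l' * c₃)
    (by linear_combination (-l') * hc + (l'' - u) * hb)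
  -- A unit coefficient `b` turns its syzygy relation into the desired linear dependence.
  have finish : ∀ b c : Q, IsUnit b → (l'' - u) * b - l' * c ∈ Ideal.span {f, g, h} →
      ∃ v : Q, IsUnit v ∧ l'' - v * l' ∈ maximalIdeal Q ^ 2 := by
    rintro b c hbu hmem
    obtain ⟨b', hbb'⟩ := hbu.exists_right_inv
    have hdep : l'' - b' * c * l' ∈ maximalIdeal Q ^ 2 := by
      have h0 := add_mem (Ideal.mul_mem_left _ b' (hI hmem)) hu
      rwa [show b' * ((l'' - u) * b - l' * c) + u = l'' - b' * c * l' by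
        linear_combination (l'' - u) * hbb'] at h0
    refine ⟨b' * c, ?_, hdep⟩
    by_contra hv
    have h1 : b' * c * l' ∈ maximalIdeal Q ^ 2 :=
      pow_two (maximalIdeal Q) ▸ Ideal.mul_mem_mul ((mem_maximalIdeal _).2 hv) hl'
    exact hl''2 (by simpa using add_mem hdep h1)
  by_contra hcon
  have hbm : ∀ b c : Q, (l'' - u) * b - l' * c ∈ Ideal.span {f, g, h} → b ∈ maximalIdeal Q :=
    fun b c hmem => (mem_maximalIdeal _).2 fun hbu => hcon (finish b c hbu hmem)
  have hcube : l * l' ∈ maximalIdeal Q ^ 3 := by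
    rw [← hb, pow_succ']
    exact add_mem (add_mem (Ideal.mul_mem_mul (hbm _ _ h₁) hf)
      (Ideal.mul_mem_mul (hbm _ _ h₂) hg)) (Ideal.mul_mem_mul (hbm _ _ h₃) hh)
  exact hl'2 (mem_sq_of_mul_mem_cube hdim hreg hl hl2 hcube)
end
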